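/- For drifted fractional Brownian motion $Y_t = \mu t + \sigma B^H_t$, the maximum loss satisfies $\lim_{x\to\infty}\frac{1}{x^2}\log P(M^{H,-}_t > x) = -\frac{1}{2\sigma^2 t^{2H}}$. -/

import Mathlib

open MeasureTheory ProbabilityTheory Real Set Filter

/-- A (standard) fractional Brownian motion with Hurst parameter `H`:
a continuous centered Gaussian process started at `0` with the fBm covariance. -/
structure IsFBM {Ω : Type*} [MeasurableSpace Ω] (P : Measure Ω) (H : ℝ)
    (B : ℝ → Ω → ℝ) : Prop where
  measurable : ∀ t, Measurable (B t)
  gaussian : ∀ (n : ℕ) (t : Fin n → ℝ) (c : Fin n → ℝ),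
    ∃ v : NNReal, P.map (fun ω => ∑ i, c i * B (t i) ω) = gaussianReal 0 v
  zero : ∀ ω, B 0 ω = 0
  cov : ∀ s t : ℝ, 0 ≤ s → 0 ≤ t →
    ∫ ω, B s ω * B t ω ∂P = (s ^ (2*H) + t ^ (2*H) - |t - s| ^ (2*H)) / 2
  cont : ∀ ω, Continuous fun t => B t ω

/-- Running supremum `S_a = sup_{0 ≤ v ≤ a} B_v`. -/
noncomputable def fbmSup {Ω : Type*} (B : ℝ → Ω → ℝ) (a : ℝ) (ω : Ω) : ℝ :=
  sSup ((fun v => B v ω) '' Set.Icc 0 a)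

/-- Running infimum `I_a = inf_{0 ≤ v ≤ a} B_v`. -/
noncomputable def fbmInf {Ω : Type*} (B : ℝ → Ω → ℝ) (a : ℝ) (ω : Ω) : ℝ :=
  sInf ((fun v => B v ω) '' Set.Icc 0 a)

/-- Maximum loss `M_a = sup_{0 ≤ u ≤ v ≤ a} (B_u - B_v)`. -/
noncomputable def fbmMaxLoss {Ω : Type*} (B : ℝ → Ω → ℝ) (a : ℝ) (ω : Ω) : ℝ :=
  sSup {x | ∃ u v : ℝ, 0 ≤ u ∧ u ≤ v ∧ v ≤ a ∧ x = B u ω - B v ω}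

/-!
The loss is the supremum of a continuous Gaussian process over the compact triangle
`0 ≤ u ≤ v ≤ t`, and for any centered continuous Gaussian process `X` on a compact space the tail
of `sup X`, with or without a bounded drift, decays at the Gaussian rate of its largest variance.
The point of largest variance alone gives the lower bound. For the upper bound, take a finite
`η`-net: if `X` exceeds `x`, then it exceeds `ρ * x` at a point of the net, or it has an increment
larger than `(1 - ρ) * x` at distance at most `η`. By uniform continuity of the paths, small `η`
makes all these increments at most `a` with probability at least `3/4`, say, and Fernique's theorem
turns this into a Gaussian tail whose rate is proportional to `a⁻²`, hence as large as we like.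
-/

open TopologicalSpace
open scoped ENNReal Topology

lemma tendsto_one_div_sq_mul_log_const_mul_exp_neg_sq {K : ℝ} (hK : 0 < K) (c b : ℝ) :
    Tendsto (fun x ↦ 1 / x ^ 2 * log (K * exp (-(c * (x + b) ^ 2)))) atTop (𝓝 (-c)) := by
  have h_expand : (fun x ↦ 1 / x ^ 2 * log (K * exp (-(c * (x + b) ^ 2)))) =ᶠ[atTop]
      fun x ↦ x⁻¹ ^ 2 * log K - c * (1 + b * x⁻¹) ^ 2 := by
    filter_upwards [eventually_gt_atTop 0] with x hx
    rw [log_mul hK.ne' (exp_pos _).ne', log_exp]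
    field_simp
    ring
  have h_lim : Tendsto (fun x : ℝ ↦ x⁻¹ ^ 2 * log K - c * (1 + b * x⁻¹) ^ 2) atTop
      (𝓝 (0 ^ 2 * log K - c * (1 + b * 0) ^ 2)) :=
    ((tendsto_inv_atTop_zero.pow 2).mul_const _).sub
      ((((tendsto_inv_atTop_zero.const_mul b).const_add 1).pow 2).const_mul c)
  exact (tendsto_congr' h_expand).2 (by simpa using h_lim)

lemma tendsto_one_div_sq_mul_log_of_gaussian_bounds {p : ℝ → ℝ} {c : ℝ} (hc : 0 < c)
    (h_lower : ∃ K > 0, ∃ b, ∀ᶠ x in atTop, K * exp (-(c * (x + b) ^ 2)) ≤ p x)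
    (h_upper : ∀ c' ∈ Ioo 0 c, ∃ K b, ∀ᶠ x in atTop, p x ≤ K * exp (-(c' * (x + b) ^ 2))) :
    Tendsto (fun x ↦ 1 / x ^ 2 * log (p x)) atTop (𝓝 (-c)) := by
  obtain ⟨K, hK, b, h_le⟩ := h_lower
  have h_pos : ∀ᶠ x in atTop, 0 < p x := h_le.mono fun x hx ↦ hx.trans_lt' (by positivity)
  refine tendsto_order.2 ⟨fun l hl ↦ ?_, fun l hl ↦ ?_⟩
  · filter_upwards [h_le,
      (tendsto_one_div_sq_mul_log_const_mul_exp_neg_sq hK c b).eventually_const_lt hl]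
      with x hx hlx
    exact hlx.trans_le (by gcongr)
  · obtain ⟨c', hc', hc'c⟩ := exists_between (max_lt hc (neg_lt.1 hl))
    obtain ⟨hc'0, hlc'⟩ := max_lt_iff.1 hc'
    obtain ⟨K', b', h_ge⟩ := h_upper c' ⟨hc'0, hc'c⟩
    have hK' : 0 < K' := by
      obtain ⟨x, hx, hpx⟩ := (h_ge.and h_pos).exists
      exact pos_of_mul_pos_left (hpx.trans_le hx) (exp_pos _).le
    filter_upwards [h_ge, h_pos,
      (tendsto_one_div_sq_mul_log_const_mul_exp_neg_sq hK' c' b').eventually_lt_const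
        (neg_lt.1 hlc')] with x hx hpx hlx
    exact hlx.trans_le' (by gcongr)

section CenteredGaussianVariable

variable {Ω : Type*} [MeasurableSpace Ω] {P : Measure Ω} {X : Ω → ℝ}

lemma hasSubgaussianMGF_of_hasGaussianLaw (hX : HasGaussianLaw X P) (hX0 : ∫ ω, X ω ∂P = 0)
    {v : ℝ} (hv : Var[X; P] ≤ v) : HasSubgaussianMGF X v.toNNReal P := by
  have h_map : P.map X = gaussianReal 0 Var[X; P].toNNReal := hX0 ▸ hX.map_eq_gaussianReal
  refine (HasSubgaussianMGF.id_map_iff hX.aemeasurable).1 ⟨fun t ↦ ?_, fun t ↦ ?_⟩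
  · exact h_map ▸ integrable_exp_mul_gaussianReal t
  · rw [mgf_id_map hX.aemeasurable, mgf_gaussianReal h_map, zero_mul, zero_add]
    gcongr

lemma measureReal_lt_le_exp_of_hasGaussianLaw (hX : HasGaussianLaw X P)
    (hX0 : ∫ ω, X ω ∂P = 0) {v : ℝ} (hv : Var[X; P] ≤ v) {r : ℝ} (hr : 0 ≤ r) :
    P.real {ω | r < X ω} ≤ exp (-(r ^ 2 / (2 * v))) := by
  have := hX.isProbabilityMeasure
  calc P.real {ω | r < X ω}
      ≤ P.real {ω | r ≤ X ω} := measureReal_mono fun ω (hω : r < X ω) ↦ hω.le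
    _ ≤ exp (-r ^ 2 / (2 * v.toNNReal)) :=
        (hasSubgaussianMGF_of_hasGaussianLaw hX hX0 hv).measure_ge_le hr
    _ = exp (-(r ^ 2 / (2 * v))) := by
        rw [coe_toNNReal v ((variance_nonneg X P).trans hv), neg_div]

lemma le_gaussianReal_real_Ioi {v : NNReal} (hv : v ≠ 0) {r : ℝ} (hr : 0 ≤ r) :
    (√(2 * π * v))⁻¹ * exp (-((r + 1) ^ 2 / (2 * v))) ≤ (gaussianReal 0 v).real (Ioi r) := by
  have h_pdf : ∀ y ∈ Ioc r (r + 1),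
      (√(2 * π * v))⁻¹ * exp (-((r + 1) ^ 2 / (2 * v))) ≤ gaussianPDFReal 0 v y := by
    intro y hy
    rw [gaussianPDFReal, sub_zero, neg_div]
    gcongr
    · exact hr.trans hy.1.le
    · exact hy.2
  calc (√(2 * π * v))⁻¹ * exp (-((r + 1) ^ 2 / (2 * v)))
      ≤ ∫ y in Ioc r (r + 1), gaussianPDFReal 0 v y := by
        simpa using setIntegral_ge_of_const_le_real (μ := volume) measurableSet_Ioc (by simp) h_pdf
          (integrable_gaussianPDFReal 0 v).integrableOn
    _ = (gaussianReal 0 v).real (Ioc r (r + 1)) := by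
        rw [Measure.real, gaussianReal_apply_eq_integral 0 hv, ENNReal.toReal_ofReal]
        exact setIntegral_nonneg measurableSet_Ioc fun y _ ↦ gaussianPDFReal_nonneg 0 v y
    _ ≤ (gaussianReal 0 v).real (Ioi r) := measureReal_mono Ioc_subset_Ioi_self

lemma le_measureReal_lt_of_hasGaussianLaw (hX : HasGaussianLaw X P)
    (hX0 : ∫ ω, X ω ∂P = 0) (hv : 0 < Var[X; P]) {r : ℝ} (hr : 0 ≤ r) :
    (√(2 * π * Var[X; P]))⁻¹ * exp (-((r + 1) ^ 2 / (2 * Var[X; P]))) ≤ P.real {ω | r < X ω} := by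
  have h_map : P.map X = gaussianReal 0 Var[X; P].toNNReal := hX0 ▸ hX.map_eq_gaussianReal
  have h_le := le_gaussianReal_real_Ioi (toNNReal_pos.2 hv).ne' hr
  rwa [← h_map, map_measureReal_apply_of_aemeasurable hX.aemeasurable measurableSet_Ioi,
    coe_toNNReal _ hv.le] at h_le

end CenteredGaussianVariable

/-- The `a`-independent bound, in Fernique's theorem, on
`∫ exp ((Fernique.logRatio c / a ^ 2) * ‖x‖ ^ 2)` under a centered Gaussian measure which gives
mass at least `c` to the ball of radius `a`. Meaningful for `c ∈ (1/2, 1)`. -/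
noncomputable def ferniqueConst (c : ℝ≥0∞) : ℝ≥0∞ :=
  .ofReal (exp (Fernique.logRatio c)) +
    ∑' n : ℕ, .ofReal (exp (-2⁻¹ * log (c / (1 - c)).toReal * 2 ^ n))

lemma ferniqueConst_ne_top {c : ℝ≥0∞} (hc_gt : 2⁻¹ < c) (hc_lt : c < 1) :
    ferniqueConst c ≠ ∞ := by
  have h_one_sub : 1 - c < c := by
    refine ENNReal.sub_lt_of_lt_add hc_lt.le ?_
    rwa [← two_mul, mul_comm, ← ENNReal.div_lt_iff (by simp) (by simp), one_div]
  have h_ratio : 1 < (c / (1 - c)).toReal := by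
    rw [ENNReal.toReal_div, one_lt_div (ENNReal.toReal_pos (tsub_pos_of_lt hc_lt).ne' (by simp))]
    exact (ENNReal.toReal_lt_toReal (by simp) hc_lt.ne_top).2 h_one_sub
  refine ENNReal.add_ne_top.mpr ⟨ENNReal.ofReal_ne_top, (Summable.tsum_ofReal_lt_top ?_).ne⟩
  exact summable_exp_nat_mul_of_ge (mul_neg_of_neg_of_pos (by norm_num) (log_pos h_ratio))
    fun n ↦ mod_cast (Nat.lt_pow_self one_lt_two).le

lemma measure_lt_norm_le_of_isGaussian {E : Type*} [NormedAddCommGroup E] [NormedSpace ℝ E]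
    [CompleteSpace E] [SecondCountableTopology E] [MeasurableSpace E] [BorelSpace E]
    {μ : Measure E} [IsGaussian μ] (hμ : ∫ x, id x ∂μ = 0) {c : ℝ≥0∞} (hc_gt : 2⁻¹ < c)
    (hc_lt : c < 1) {a r : ℝ} (ha : c ≤ μ {x | ‖x‖ ≤ a}) (hr : 0 ≤ r) :
    μ {x | r < ‖x‖} ≤
      ferniqueConst c * .ofReal (exp (-(Fernique.logRatio c * a⁻¹ ^ 2 * r ^ 2))) := by
  set κ := Fernique.logRatio c * a⁻¹ ^ 2
  have hκ : 0 ≤ κ := mul_nonneg (Fernique.logRatio_pos hc_gt hc_lt).le (sq_nonneg _)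
  rw [exp_neg, ENNReal.ofReal_inv_of_pos (exp_pos _), ← div_eq_mul_inv]
  calc μ {x | r < ‖x‖}
      ≤ μ {x | ENNReal.ofReal (exp (κ * r ^ 2)) ≤ .ofReal (exp (κ * ‖x‖ ^ 2))} := by
        refine measure_mono fun x (hx : r < ‖x‖) ↦ ENNReal.ofReal_le_ofReal ?_
        gcongr
    _ ≤ (∫⁻ x, .ofReal (exp (κ * ‖x‖ ^ 2)) ∂μ) / .ofReal (exp (κ * r ^ 2)) :=
        meas_ge_le_lintegral_div (by fun_prop) (by simp [exp_pos]) ENNReal.ofReal_ne_top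
    _ ≤ ferniqueConst c / .ofReal (exp (κ * r ^ 2)) := by
        gcongr
        exact lintegral_exp_mul_sq_norm_le_of_map_rotation_eq_self
          (IsGaussian.map_rotation_eq_self hμ _) ha hc_gt

section CenteredGaussianProcess

variable {Ω T : Type*} [MeasurableSpace Ω] {P : Measure Ω} {X : T → Ω → ℝ}

lemma isGaussianProcess_sub (hX : IsGaussianProcess X P) :
    IsGaussianProcess (fun (p : T × T) ω ↦ X p.1 ω - X p.2 ω) P := by
  classical
  exact hX.of_isGaussianProcess fun p ↦ ⟨{p.1, p.2},
    ContinuousLinearMap.proj ⟨p.1, by simp⟩ - ContinuousLinearMap.proj ⟨p.2, by simp⟩,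
    fun ω ↦ rfl⟩

lemma measure_exists_mem_lt_abs_le (hX : IsGaussianProcess X P) (hX0 : ∀ t, ∫ ω, X t ω ∂P = 0)
    {c : ℝ≥0∞} (hc_gt : 2⁻¹ < c) (hc_lt : c < 1) {a r : ℝ} (ha : 0 ≤ a)
    (h : c ≤ P {ω | ∀ t, |X t ω| ≤ a}) (hr : 0 ≤ r) (I : Finset T) :
    P {ω | ∃ t ∈ I, r < |X t ω|} ≤
      ferniqueConst c * .ofReal (exp (-(Fernique.logRatio c * a⁻¹ ^ 2 * r ^ 2))) := by
  let XI : Ω → I → ℝ := fun ω ↦ I.restrict (X · ω)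
  have hXI : HasGaussianLaw XI P := hX.hasGaussianLaw I
  have : IsGaussian (P.map XI) := hXI.isGaussian_map
  have h_mean : ∫ x, id x ∂P.map XI = 0 := by
    rw [integral_map hXI.aemeasurable (by fun_prop)]
    ext t
    exact (eval_integral (fun s : I ↦ (hX.hasGaussianLaw_eval s).integrable) t).trans (hX0 t)
  have h_ball : c ≤ P.map XI {x | ‖x‖ ≤ a} := by
    rw [Measure.map_apply_of_aemeasurable hXI.aemeasurable
      (measurableSet_le measurable_norm measurable_const)]
    exact h.trans (measure_mono fun ω hω ↦ (pi_norm_le_iff_of_nonneg ha).2 fun t ↦ hω t)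
  refine le_trans ?_ (measure_lt_norm_le_of_isGaussian h_mean hc_gt hc_lt h_ball hr)
  rw [Measure.map_apply_of_aemeasurable hXI.aemeasurable
    (measurableSet_lt measurable_const measurable_norm)]
  exact measure_mono fun ω ⟨t, ht, hrt⟩ ↦ hrt.trans_le (norm_le_pi_norm (XI ω) ⟨t, ht⟩)

lemma measure_exists_lt_abs_le_of_countable [Countable T] (hX : IsGaussianProcess X P)
    (hX0 : ∀ t, ∫ ω, X t ω ∂P = 0) {c : ℝ≥0∞} (hc_gt : 2⁻¹ < c) (hc_lt : c < 1) {a r : ℝ}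
    (ha : 0 ≤ a) (h : c ≤ P {ω | ∀ t, |X t ω| ≤ a}) (hr : 0 ≤ r) :
    P {ω | ∃ t, r < |X t ω|} ≤
      ferniqueConst c * .ofReal (exp (-(Fernique.logRatio c * a⁻¹ ^ 2 * r ^ 2))) := by
  have h_union : {ω | ∃ t, r < |X t ω|} = ⋃ I : Finset T, {ω | ∃ t ∈ I, r < |X t ω|} := by
    ext ω
    simp only [mem_ofPred_eq, mem_iUnion]
    exact ⟨fun ⟨t, ht⟩ ↦ ⟨{t}, t, by simp, ht⟩, fun ⟨_, t, _, ht⟩ ↦ ⟨t, ht⟩⟩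
  have h_mono : Monotone fun I : Finset T ↦ {ω | ∃ t ∈ I, r < |X t ω|} :=
    fun I J hIJ ω ⟨t, ht, hrt⟩ ↦ ⟨t, hIJ ht, hrt⟩
  rw [h_union, h_mono.directed_le.measure_iUnion]
  exact iSup_le (measure_exists_mem_lt_abs_le hX hX0 hc_gt hc_lt ha h hr)

lemma measure_exists_lt_abs_le_of_continuous [TopologicalSpace T] [SeparableSpace T]
    (hX : IsGaussianProcess X P) (hX0 : ∀ t, ∫ ω, X t ω ∂P = 0)
    (hX_cont : ∀ ω, Continuous (X · ω)) {c : ℝ≥0∞} (hc_gt : 2⁻¹ < c) (hc_lt : c < 1) {a r : ℝ}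
    (ha : 0 ≤ a) (h : c ≤ P {ω | ∀ t, |X t ω| ≤ a}) (hr : 0 ≤ r) :
    P {ω | ∃ t, r < |X t ω|} ≤
      ferniqueConst c * .ofReal (exp (-(Fernique.logRatio c * a⁻¹ ^ 2 * r ^ 2))) := by
  obtain ⟨D, hD_count, hD_dense⟩ := exists_countable_dense T
  have : Countable D := hD_count
  have h_dense : {ω | ∃ t, r < |X t ω|} ⊆ {ω | ∃ t : D, r < |X t ω|} := fun ω hω ↦
    have ⟨t, htD, ht⟩ := hD_dense.exists_mem_open
      (isOpen_lt continuous_const (hX_cont ω).abs) hω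
    ⟨⟨t, htD⟩, ht⟩
  refine (measure_mono h_dense).trans ?_
  refine measure_exists_lt_abs_le_of_countable (hX.restrict D) (fun t ↦ hX0 t) hc_gt hc_lt ha
    (h.trans ?_) hr
  exact measure_mono fun ω hω t ↦ hω t

end CenteredGaussianProcess

section CompactIndex

variable {Ω T : Type*} [MeasurableSpace Ω] {P : Measure Ω} {X : T → Ω → ℝ}
  [PseudoMetricSpace T] [CompactSpace T]

lemma exists_le_measure_forall_abs_sub_le [IsProbabilityMeasure P]
    (hX_cont : ∀ ω, Continuous (X · ω)) {c : ℝ≥0∞} (hc : c < 1) {a : ℝ} (ha : 0 < a) :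
    ∃ η > 0, c ≤ P {ω | ∀ s t, dist s t ≤ η → |X s ω - X t ω| ≤ a} := by
  let S : ℕ → Set Ω := fun n ↦ {ω | ∀ s t, dist s t ≤ 1 / (n + 1 : ℝ) → |X s ω - X t ω| ≤ a}
  have hS_mono : Monotone S := fun m n hmn ω hω s t hst ↦
    hω s t (hst.trans (Nat.one_div_le_one_div hmn))
  have hS_union : ⋃ n, S n = univ := eq_univ_of_forall fun ω ↦ by
    obtain ⟨δ, hδ, h_unif⟩ := Metric.uniformContinuous_iff.1
      (CompactSpace.uniformContinuous_of_continuous (hX_cont ω)) a ha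
    obtain ⟨n, hn⟩ := exists_nat_one_div_lt hδ
    exact mem_iUnion.2 ⟨n, fun s t hst ↦ (h_unif (hst.trans_lt hn)).le⟩
  have h_lim : Tendsto (P ∘ S) atTop (𝓝 1) := by
    simpa only [hS_union, measure_univ] using tendsto_measure_iUnion_atTop (μ := P) hS_mono
  obtain ⟨n, hn⟩ := (h_lim.eventually_const_lt hc).exists
  exact ⟨1 / (n + 1), Nat.one_div_pos_of_nat, hn.le⟩

lemma exists_measureReal_exists_lt_abs_sub_le (hX : IsGaussianProcess X P)
    (hX0 : ∀ t, ∫ ω, X t ω ∂P = 0) (hX_cont : ∀ ω, Continuous (X · ω)) (A : ℝ) :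
    ∃ η > 0, ∃ C, ∀ r, 0 ≤ r →
      P.real {ω | ∃ s t, dist s t ≤ η ∧ r < |X s ω - X t ω|} ≤ C * exp (-(A * r ^ 2)) := by
  have := hX.isProbabilityMeasure
  obtain ⟨c, hc_gt, hc_lt⟩ : ∃ c : ℝ≥0∞, 2⁻¹ < c ∧ c < 1 :=
    exists_between (ENNReal.inv_lt_one.2 ENNReal.one_lt_two)
  obtain ⟨a, ha, hA⟩ : ∃ a > 0, A ≤ Fernique.logRatio c * a⁻¹ ^ 2 := by
    have h_lim : Tendsto (fun b ↦ Fernique.logRatio c * b ^ 2) atTop atTop :=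
      (tendsto_pow_atTop two_ne_zero).const_mul_atTop (Fernique.logRatio_pos hc_gt hc_lt)
    obtain ⟨b, hbA, hb⟩ := ((h_lim.eventually_ge_atTop A).and (eventually_gt_atTop 0)).exists
    exact ⟨b⁻¹, inv_pos.2 hb, by rwa [inv_inv]⟩
  obtain ⟨η, hη, h_le⟩ := exists_le_measure_forall_abs_sub_le (P := P) hX_cont hc_lt ha
  refine ⟨η, hη, (ferniqueConst c).toReal, fun r hr ↦ ?_⟩
  let Δ : {p : T × T // dist p.1 p.2 ≤ η} → Ω → ℝ := fun p ω ↦ X p.1.1 ω - X p.1.2 ω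
  have hΔ : IsGaussianProcess Δ P :=
    (isGaussianProcess_sub hX).restrict {p | dist p.1 p.2 ≤ η}
  have hΔ0 : ∀ p, ∫ ω, Δ p ω ∂P = 0 := fun p ↦ by
    rw [integral_sub (hX.hasGaussianLaw_eval _).integrable (hX.hasGaussianLaw_eval _).integrable,
      hX0, hX0, sub_zero]
  have hΔ_cont : ∀ ω, Continuous (Δ · ω) := fun ω ↦
    ((hX_cont ω).comp (by fun_prop)).sub ((hX_cont ω).comp (by fun_prop))
  have h_tail := measure_exists_lt_abs_le_of_continuous hΔ hΔ0 hΔ_cont hc_gt hc_lt ha.le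
    (h_le.trans (measure_mono fun ω hω p ↦ hω _ _ p.2)) hr
  calc P.real {ω | ∃ s t, dist s t ≤ η ∧ r < |X s ω - X t ω|}
      ≤ P.real {ω | ∃ p, r < |Δ p ω|} :=
        measureReal_mono fun ω ⟨s, t, hst, hr⟩ ↦ ⟨⟨(s, t), hst⟩, hr⟩
    _ ≤ (ferniqueConst c).toReal * exp (-(Fernique.logRatio c * a⁻¹ ^ 2 * r ^ 2)) := by
        have h_top := ENNReal.mul_ne_top (ferniqueConst_ne_top hc_gt hc_lt)
          (ENNReal.ofReal_ne_top (r := exp (-(Fernique.logRatio c * a⁻¹ ^ 2 * r ^ 2))))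
        simpa only [Measure.real, ENNReal.toReal_mul, ENNReal.toReal_ofReal (exp_pos _).le] using
          ENNReal.toReal_mono h_top h_tail
    _ ≤ (ferniqueConst c).toReal * exp (-(A * r ^ 2)) := by gcongr

lemma exists_finset_measureReal_exists_add_lt_le [IsFiniteMeasure P] (X : T → Ω → ℝ) {η : ℝ}
    (hη : 0 < η) :
    ∃ N : Finset T, ∀ y z, P.real {ω | ∃ t, y + z < X t ω} ≤
      ∑ s ∈ N, P.real {ω | y < X s ω} +
        P.real {ω | ∃ s t, dist s t ≤ η ∧ z < |X s ω - X t ω|} := by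
  obtain ⟨N, -, hN_fin, hN⟩ := finite_cover_balls_of_compact (isCompact_univ (X := T)) hη
  lift N to Finset T using hN_fin
  refine ⟨N, fun y z ↦ ?_⟩
  have h_subset : {ω | ∃ t, y + z < X t ω} ⊆
      (⋃ s ∈ N, {ω | y < X s ω}) ∪ {ω | ∃ s t, dist s t ≤ η ∧ z < |X s ω - X t ω|} := by
    rintro ω ⟨t, ht⟩
    obtain ⟨s, hsN, hts⟩ := mem_iUnion₂.1 (hN (mem_univ t))
    by_cases hs : y < X s ω
    · exact .inl (mem_biUnion hsN hs)
    · exact .inr ⟨t, s, (Metric.mem_ball.1 hts).le, (le_abs_self _).trans_lt' (by linarith)⟩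
  calc P.real {ω | ∃ t, y + z < X t ω}
      ≤ P.real (⋃ s ∈ N, {ω | y < X s ω}) +
          P.real {ω | ∃ s t, dist s t ≤ η ∧ z < |X s ω - X t ω|} :=
        (measureReal_mono h_subset).trans (measureReal_union_le _ _)
    _ ≤ ∑ s ∈ N, P.real {ω | y < X s ω} +
          P.real {ω | ∃ s t, dist s t ≤ η ∧ z < |X s ω - X t ω|} := by
        gcongr
        exact measureReal_biUnion_finset_le _ _

lemma exists_measureReal_exists_lt_le (hX : IsGaussianProcess X P)
    (hX0 : ∀ t, ∫ ω, X t ω ∂P = 0) (hX_cont : ∀ ω, Continuous (X · ω)) {v : ℝ}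
    (hX_var : ∀ t, Var[X t; P] ≤ v) {c : ℝ} (hc0 : 0 ≤ c) (hc : c < 1 / (2 * v)) :
    ∃ C, ∀ x, 0 ≤ x → P.real {ω | ∃ t, x < X t ω} ≤ C * exp (-(c * x ^ 2)) := by
  have := hX.isProbabilityMeasure
  have hv : 0 < 2 * v := one_div_pos.1 (hc0.trans_lt hc)
  obtain ⟨ρ, hρ0, hρ1, hρ⟩ : ∃ ρ : ℝ, 0 ≤ ρ ∧ ρ < 1 ∧ ρ ^ 2 / (2 * v) = c := by
    refine ⟨√(2 * v * c), sqrt_nonneg _, ?_, ?_⟩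
    · rwa [sqrt_lt' one_pos, one_pow, mul_comm, ← lt_div_iff₀ hv]
    · rw [sq_sqrt (by positivity), mul_div_cancel_left₀ _ hv.ne']
  have h_one_sub : 0 < 1 - ρ := sub_pos.2 hρ1
  obtain ⟨η, hη, C, h_osc⟩ :=
    exists_measureReal_exists_lt_abs_sub_le hX hX0 hX_cont (c / (1 - ρ) ^ 2)
  obtain ⟨N, hN⟩ := exists_finset_measureReal_exists_add_lt_le (P := P) X hη
  refine ⟨N.card + C, fun x hx ↦ ?_⟩
  have h_point (s : T) : P.real {ω | ρ * x < X s ω} ≤ exp (-(c * x ^ 2)) := by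
    rw [← hρ, div_mul_eq_mul_div, ← mul_pow]
    exact measureReal_lt_le_exp_of_hasGaussianLaw (hX.hasGaussianLaw_eval s) (hX0 s) (hX_var s)
      (mul_nonneg hρ0 hx)
  calc P.real {ω | ∃ t, x < X t ω}
      = P.real {ω | ∃ t, ρ * x + (1 - ρ) * x < X t ω} := by ring_nf
    _ ≤ ∑ s ∈ N, P.real {ω | ρ * x < X s ω} +
          P.real {ω | ∃ s t, dist s t ≤ η ∧ (1 - ρ) * x < |X s ω - X t ω|} := hN _ _
    _ ≤ N.card * exp (-(c * x ^ 2)) +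
          C * exp (-(c / (1 - ρ) ^ 2 * ((1 - ρ) * x) ^ 2)) := by
        rw [← nsmul_eq_mul]
        exact add_le_add (Finset.sum_le_card_nsmul _ _ _ fun s _ ↦ h_point s)
          (h_osc _ (mul_nonneg h_one_sub.le hx))
    _ = (N.card + C) * exp (-(c * x ^ 2)) := by
        rw [mul_pow, ← mul_assoc, div_mul_cancel₀ _ (pow_ne_zero 2 h_one_sub.ne'), add_mul]

theorem tendsto_one_div_sq_mul_log_measureReal_lt_iSup (hX : IsGaussianProcess X P)
    (hX0 : ∀ t, ∫ ω, X t ω ∂P = 0) (hX_cont : ∀ ω, Continuous (X · ω)) {v : ℝ} (hv : 0 < v)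
    (hX_var : ∀ t, Var[X t; P] ≤ v) {t₀ : T} (ht₀ : Var[X t₀; P] = v) {m : T → ℝ}
    (hm : BddAbove (range m)) :
    Tendsto (fun x ↦ 1 / x ^ 2 * log (P.real {ω | x < ⨆ t, (m t + X t ω)})) atTop
      (𝓝 (-(1 / (2 * v)))) := by
  have := hX.isProbabilityMeasure
  have : Nonempty T := ⟨t₀⟩
  refine tendsto_one_div_sq_mul_log_of_gaussian_bounds (by positivity) ?_ fun c hc ↦ ?_
  · refine ⟨(√(2 * π * v))⁻¹, by positivity, 1 - m t₀, ?_⟩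
    filter_upwards [eventually_ge_atTop (m t₀)] with x hx
    have h_bdd : ∀ ω, BddAbove (range fun t ↦ m t + X t ω) := fun ω ↦
      hm.range_add (isCompact_range (hX_cont ω)).bddAbove
    calc (√(2 * π * v))⁻¹ * exp (-(1 / (2 * v) * (x + (1 - m t₀)) ^ 2))
        = (√(2 * π * v))⁻¹ * exp (-((x - m t₀ + 1) ^ 2 / (2 * v))) := by ring_nf
      _ ≤ P.real {ω | x - m t₀ < X t₀ ω} := by
          rw [← ht₀] at hv ⊢
          exact le_measureReal_lt_of_hasGaussianLaw (hX.hasGaussianLaw_eval t₀) (hX0 t₀) hv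
            (sub_nonneg.2 hx)
      _ ≤ P.real {ω | x < ⨆ t, (m t + X t ω)} := measureReal_mono fun ω hω ↦
          (sub_lt_iff_lt_add'.1 hω).trans_le (le_ciSup (h_bdd ω) t₀)
  · obtain ⟨M, hM⟩ := hm
    obtain ⟨C, hC⟩ := exists_measureReal_exists_lt_le hX hX0 hX_cont hX_var hc.1.le hc.2
    refine ⟨C, -M, ?_⟩
    filter_upwards [eventually_ge_atTop M] with x hx
    refine (measureReal_mono fun ω (hω : x < _) ↦ ?_).trans (hC (x + -M) (by linarith))
    obtain ⟨t, ht⟩ := exists_lt_of_lt_ciSup hω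
    exact ⟨t, by linarith [hM (mem_range_self t)]⟩

end CompactIndex

/-- The triangle of pairs of times `0 ≤ u ≤ v ≤ t` over which the maximum loss up to time `t` is
taken, so that it is a supremum indexed by a compact metric space. -/
def lossTriangle (t : ℝ) : Set (ℝ × ℝ) :=
  {p | 0 ≤ p.1 ∧ p.1 ≤ p.2 ∧ p.2 ≤ t}

lemma isCompact_lossTriangle (t : ℝ) : IsCompact (lossTriangle t) := by
  refine (isCompact_Icc.prod isCompact_Icc).of_isClosed_subset
    (s := Icc 0 t ×ˢ Icc 0 t) ?_ fun p ⟨h0, h12, ht⟩ ↦ ⟨⟨h0, h12.trans ht⟩, h0.trans h12, ht⟩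
  exact (isClosed_le continuous_const continuous_fst).inter
    ((isClosed_le continuous_fst continuous_snd).inter
      (isClosed_le continuous_snd continuous_const))

lemma sSup_drifted_loss_eq_iSup (b : ℝ → ℝ) (μ σ t : ℝ) :
    sSup {r | ∃ u v : ℝ, 0 ≤ u ∧ u ≤ v ∧ v ≤ t ∧ r = (μ * u + σ * b u) - (μ * v + σ * b v)} =
      ⨆ p : lossTriangle t, (μ * (p.1.1 - p.1.2) + σ * (b p.1.1 - b p.1.2)) := by
  rw [← sSup_range]
  congr 1
  ext r
  constructor
  · rintro ⟨u, v, hu, huv, hv, rfl⟩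
    exact ⟨⟨(u, v), hu, huv, hv⟩, by ring⟩
  · rintro ⟨⟨⟨u, v⟩, hu, huv, hv⟩, rfl⟩
    exact ⟨u, v, hu, huv, hv, by ring⟩

namespace IsFBM

variable {Ω : Type*} [MeasurableSpace Ω] {P : Measure Ω} {H : ℝ} {B : ℝ → Ω → ℝ}

lemma isGaussianProcess (hB : IsFBM P H B) : IsGaussianProcess B P where
  hasGaussianLaw I := by
    have h_meas : Measurable fun ω ↦ I.restrict (B · ω) :=
      measurable_pi_lambda _ fun t ↦ hB.measurable t
    refine ⟨isGaussian_of_map_eq_gaussianReal fun L ↦ ?_⟩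
    let e := I.equivFin
    obtain ⟨v, hv⟩ := hB.gaussian I.card (fun i ↦ e.symm i)
      fun i ↦ L fun t ↦ if e.symm i = t then 1 else 0
    refine ⟨0, v, ?_⟩
    rw [Measure.map_map (by fun_prop) h_meas, ← hv]
    congr 1
    ext ω
    rw [e.symm.sum_comp fun s : I ↦ (L fun t ↦ if s = t then 1 else 0) * B s ω]
    exact (L.toLinearMap.pi_apply_eq_sum_univ _).trans
      (Finset.sum_congr rfl fun t _ ↦ mul_comm _ _)

lemma memLp_two (hB : IsFBM P H B) (t : ℝ) : MemLp (B t) 2 P :=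
  (hB.isGaussianProcess.hasGaussianLaw_eval t).memLp_two

lemma integrable (hB : IsFBM P H B) (t : ℝ) : Integrable (B t) P :=
  (hB.isGaussianProcess.hasGaussianLaw_eval t).integrable

lemma integral_eq_zero (hB : IsFBM P H B) (t : ℝ) : ∫ ω, B t ω ∂P = 0 := by
  obtain ⟨v, hv⟩ := hB.gaussian 1 (fun _ ↦ t) (fun _ ↦ 1)
  simp only [Finset.univ_unique, Finset.sum_const, Finset.card_singleton, one_smul, one_mul] at hv
  rw [← integral_map (φ := B t) (f := fun x ↦ x) (hB.measurable t).aemeasurable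
    aestronglyMeasurable_id, hv, integral_id_gaussianReal]

lemma covariance_eq (hB : IsFBM P H B) {s t : ℝ} (hs : 0 ≤ s) (ht : 0 ≤ t) :
    cov[B s, B t; P] = (s ^ (2 * H) + t ^ (2 * H) - |t - s| ^ (2 * H)) / 2 := by
  rw [covariance, hB.integral_eq_zero, hB.integral_eq_zero]
  simpa only [sub_zero] using hB.cov s t hs ht

lemma variance_sub (hB : IsFBM P H B) (hH : H ≠ 0) {s t : ℝ} (hs : 0 ≤ s) (ht : 0 ≤ t) :
    Var[fun ω ↦ B s ω - B t ω; P] = |s - t| ^ (2 * H) := by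
  have := hB.isGaussianProcess.isProbabilityMeasure
  have h_zero : (0 : ℝ) ^ (2 * H) = 0 := zero_rpow (by simpa)
  rw [variance_fun_sub (hB.memLp_two s) (hB.memLp_two t),
    ← covariance_self (hB.measurable s).aemeasurable,
    ← covariance_self (hB.measurable t).aemeasurable, hB.covariance_eq hs hs,
    hB.covariance_eq hs ht, hB.covariance_eq ht ht, sub_self, sub_self, abs_zero, h_zero,
    abs_sub_comm t s]
  ring

lemma variance_loss (hB : IsFBM P H B) (hH : H ≠ 0) (σ : ℝ) {u v : ℝ} (hu : 0 ≤ u)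
    (hv : 0 ≤ v) :
    Var[fun ω ↦ σ * (B u ω - B v ω); P] = σ ^ 2 * |u - v| ^ (2 * H) := by
  rw [variance_const_mul, hB.variance_sub hH hu hv]

lemma variance_loss_le (hB : IsFBM P H B) (hH : 0 < H) (σ : ℝ) {t : ℝ} (p : lossTriangle t) :
    Var[fun ω ↦ σ * (B p.1.1 ω - B p.1.2 ω); P] ≤ σ ^ 2 * t ^ (2 * H) := by
  obtain ⟨⟨u, v⟩, hu, huv, hv⟩ := p
  rw [hB.variance_loss hH.ne' σ hu (hu.trans huv)]
  gcongr
  rw [abs_sub_comm, abs_of_nonneg (sub_nonneg.2 huv)]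
  exact (sub_le_self v hu).trans hv

end IsFBM

theorem drifted_maxLoss_log_tail_asymptotic_general {Ω : Type*} [MeasurableSpace Ω]
    {P : Measure Ω} {H : ℝ} {B : ℝ → Ω → ℝ} (hH : 0 < H) (hB : IsFBM P H B) (μ : ℝ)
    {σ t : ℝ} (hσ : σ ≠ 0) (ht : 0 < t) :
    Tendsto (fun x : ℝ => (1 / x ^ 2) *
        Real.log ((P {ω | x < sSup {r | ∃ u v : ℝ, 0 ≤ u ∧ u ≤ v ∧ v ≤ t ∧
            r = (μ * u + σ * B u ω) - (μ * v + σ * B v ω)}}).toReal))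
      atTop (nhds (-(1 / (2 * σ ^ 2 * t ^ (2 * H))))) := by
  let X : lossTriangle t → Ω → ℝ := fun p ω ↦ σ * (B p.1.1 ω - B p.1.2 ω)
  have : CompactSpace (lossTriangle t) := isCompact_iff_compactSpace.1 (isCompact_lossTriangle t)
  have hX : IsGaussianProcess X P :=
    ((isGaussianProcess_sub hB.isGaussianProcess).restrict (lossTriangle t)).smul fun _ ↦ σ
  have hX0 (p) : ∫ ω, X p ω ∂P = 0 := by
    rw [integral_const_mul, integral_sub (hB.integrable _) (hB.integrable _),
      hB.integral_eq_zero, hB.integral_eq_zero, sub_zero, mul_zero]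
  have hX_cont (ω) : Continuous (X · ω) :=
    (((hB.cont ω).comp (by fun_prop)).sub ((hB.cont ω).comp (by fun_prop))).const_mul σ
  let p₀ : lossTriangle t := ⟨(0, t), le_rfl, ht.le, le_rfl⟩
  have hp₀ : Var[X p₀; P] = σ ^ 2 * t ^ (2 * H) := by
    rw [hB.variance_loss hH.ne' σ le_rfl ht.le, zero_sub, abs_neg, abs_of_pos ht]
  have h_drift : BddAbove (range fun p : lossTriangle t ↦ μ * (p.1.1 - p.1.2)) :=
    (isCompact_range (by fun_prop)).bddAbove
  simpa only [sSup_drifted_loss_eq_iSup, mul_assoc] using!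
    tendsto_one_div_sq_mul_log_measureReal_lt_iSup hX hX0 hX_cont (by positivity)
      (hB.variance_loss_le hH σ) hp₀ h_drift

theorem drifted_maxLoss_log_tail_asymptotic {Ω : Type*} [MeasurableSpace Ω] (P : Measure Ω)
    [IsProbabilityMeasure P] (H : ℝ) (B : ℝ → Ω → ℝ)
    (hH : H ∈ Set.Ico (1/2 : ℝ) 1) (hB : IsFBM P H B)
    (μ σ t : ℝ) (hσ : 0 < σ) (ht : 0 < t) :
    Tendsto (fun x : ℝ => (1 / x ^ 2) *
        Real.log ((P {ω | x < sSup {r | ∃ u v : ℝ, 0 ≤ u ∧ u ≤ v ∧ v ≤ t ∧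
            r = (μ * u + σ * B u ω) - (μ * v + σ * B v ω)}}).toReal))
      atTop (nhds (-(1 / (2 * σ ^ 2 * t ^ (2 * H))))) :=
  drifted_maxLoss_log_tail_asymptotic_general (one_half_pos.trans_le hH.1) hB μ hσ.ne' ht
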